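/- Let n ≤ m, let M be an n×m complex matrix, and let M′ be the (n+1)×m matrix obtained from M by appending the row X ∈ ℂ^m. Let 1 ≤ k−1 ≤ ℓ < m. Let v_1, …, v_m be an orthonormal basis of ℂ^m consisting of eigenvectors of M†M with M†M v_i = σ_i(M)² v_i for each i (where σ_1(M) ≥ … ≥ σ_m(M)), and let P be the orthogonal projection onto the span of v_{ℓ+1}, …, v_m (the m−ℓ smallest right-singular directions of M). Then ∏_{i=k}^{ℓ+1} σ_i(M′) ≥ ‖P X†‖_2 · (‖X‖_2² + σ_{k−1}(M)²)^{−1/2} · ∏_{i=k−1}^{ℓ} σ_i(M). -/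

import Mathlib

open Matrix

/-- The Euclidean norm of a vector in `ℂ^m`. -/
noncomputable def vecNorm2 {m : ℕ} (v : Fin m → ℂ) : ℝ :=
  Real.sqrt (∑ i, ‖v i‖ ^ 2)

/-- The standard Hermitian inner product on `ℂ^m` (conjugate-linear in the first variable). -/
noncomputable def cInner {m : ℕ} (x y : Fin m → ℂ) : ℂ :=
  ∑ j, starRingEnd ℂ (x j) * y j

/-- The `(n+1) × m` matrix obtained from an `n × m` matrix `M` by appending the row `X`. -/
def appendRow {n m : ℕ} (M : Matrix (Fin n) (Fin m) ℂ) (X : Fin m → ℂ) :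
    Matrix (Fin (n + 1)) (Fin m) ℂ :=
  Matrix.of fun i j => if h : (i : ℕ) < n then M ⟨(i : ℕ), h⟩ j else X j

lemma weyl_aux {m r : ℕ} {E : Type*} [NormedAddCommGroup E] [InnerProductSpace ℂ E]
    (a b : OrthonormalBasis (Fin m) ℂ E) (α β : Fin m → ℝ) (hα : Antitone α) (hβ : Antitone β)
    (φ : E →ₗ[ℂ] (Fin r → ℂ)) (i j : Fin m) (hij : (i : ℕ) + r ≤ j)
    (h : ∀ z, φ z = 0 → ∑ s, α s * ‖inner ℂ (a s) z‖ ^ 2 ≤ ∑ s, β s * ‖inner ℂ (b s) z‖ ^ 2) :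
    α j ≤ β i := by
  classical
  have : FiniteDimensional ℂ E := a.toBasis.finiteDimensional_of_finite
  have hE : Module.finrank ℂ E = m := by
    simpa using Module.finrank_eq_card_basis a.toBasis
  let f1 : E →ₗ[ℂ] ({s : Fin m // j < s} → ℂ) := LinearMap.pi fun s => innerₛₗ ℂ (a s.1)
  let f2 : E →ₗ[ℂ] ({s : Fin m // s < i} → ℂ) := LinearMap.pi fun s => innerₛₗ ℂ (b s.1)
  have hker : LinearMap.ker (f1.prod (f2.prod φ)) ≠ ⊥ := by
    apply LinearMap.ker_ne_bot_of_finrank_lt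
    rw [hE]
    simp only [Module.finrank_prod, Module.finrank_fintype_fun_eq_card, Fintype.card_fin]
    rw [Fintype.card_subtype, Fintype.card_subtype]
    have h1 : (Finset.univ.filter fun s : Fin m => j < s) = Finset.Ioi j := by ext; simp
    have h2 : (Finset.univ.filter fun s : Fin m => s < i) = Finset.Iio i := by ext; simp
    rw [h1, h2, Fin.card_Ioi, Fin.card_Iio]
    have := j.2
    omega
  obtain ⟨z, hz, hz0⟩ := (Submodule.ne_bot_iff _).1 hker
  have hz' : f1 z = 0 ∧ f2 z = 0 ∧ φ z = 0 := by simpa using hz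
  obtain ⟨z1, z2, z3⟩ := hz'
  have e1 : ∀ s, j < s → inner ℂ (a s) z = 0 := fun s hs => congrFun z1 ⟨s, hs⟩
  have e2 : ∀ s, s < i → inner ℂ (b s) z = 0 := fun s hs => congrFun z2 ⟨s, hs⟩
  have l1 : α j * ‖z‖ ^ 2 ≤ ∑ s, α s * ‖inner ℂ (a s) z‖ ^ 2 := by
    rw [← a.sum_sq_norm_inner_right z, Finset.mul_sum]
    refine Finset.sum_le_sum fun s _ => ?_
    rcases lt_or_ge j s with hs | hs
    · simp [e1 s hs]
    · exact mul_le_mul_of_nonneg_right (hα hs) (by positivity)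
  have l2 : ∑ s, β s * ‖inner ℂ (b s) z‖ ^ 2 ≤ β i * ‖z‖ ^ 2 := by
    rw [← b.sum_sq_norm_inner_right z, Finset.mul_sum]
    refine Finset.sum_le_sum fun s _ => ?_
    rcases lt_or_ge s i with hs | hs
    · simp [e2 s hs]
    · exact mul_le_mul_of_nonneg_right (hβ hs) (by positivity)
  have hp : 0 < ‖z‖ ^ 2 := by positivity
  exact le_of_mul_le_mul_right (l1.trans ((h z z3).trans l2)) hp

lemma quad_aux {m : ℕ} {E : Type*} [NormedAddCommGroup E] [InnerProductSpace ℂ E]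
    (b : OrthonormalBasis (Fin m) ℂ E) (c : Fin m → ℝ) (T : E →ₗ[ℂ] E)
    (hT : ∀ i, T (b i) = (c i : ℂ) • b i) (z : E) :
    inner ℂ z (T z) = ((∑ s, c s * ‖inner ℂ (b s) z‖ ^ 2 : ℝ) : ℂ) := by
  have h1 : T z = ∑ s, (inner ℂ (b s) z) • (c s : ℂ) • b s := by
    conv_lhs => rw [← b.sum_repr' z]
    simp [hT]
  rw [h1, inner_sum]
  push_cast
  refine Finset.sum_congr rfl fun s _ => ?_
  rw [inner_smul_right, inner_smul_right, ← inner_conj_symm z (b s)]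
  rw [mul_left_comm, RCLike.mul_conj]
  simp

lemma spec_aux {m : ℕ} {E : Type*} [NormedAddCommGroup E] [InnerProductSpace ℂ E]
    (v : OrthonormalBasis (Fin m) ℂ E) (β : Fin m → ℝ) (hβ : ∀ i, 0 < β i) (x : E) :
    ∃ (a : OrthonormalBasis (Fin m) ℂ E) (κ : Fin m → ℝ), Antitone κ ∧
      (∀ z, ∑ s, κ s * ‖inner ℂ (a s) z‖ ^ 2 =
        ∑ s, β s * ‖inner ℂ (v s) z‖ ^ 2 + ‖inner ℂ x z‖ ^ 2) ∧
      ∏ s, κ s = (∏ s, β s) * (1 + ∑ s, ‖inner ℂ (v s) x‖ ^ 2 / β s) := by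
  classical
  have : FiniteDimensional ℂ E := v.toBasis.finiteDimensional_of_finite
  have hE : Module.finrank ℂ E = m := by
    simpa using Module.finrank_eq_card_basis v.toBasis
  let T0 : E →ₗ[ℂ] E := v.toBasis.constr ℂ fun i => (β i : ℂ) • v i
  let T1 : E →ₗ[ℂ] E := (innerₛₗ ℂ x).smulRight x
  have hT0 : ∀ i, T0 (v i) = (β i : ℂ) • v i := fun i => by
    have := v.toBasis.constr_basis ℂ (fun i => (β i : ℂ) • v i) i
    rw [v.coe_toBasis] at this
    exact this
  have hT1 : ∀ z, T1 z = inner ℂ x z • x := fun z => rfl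
  have hq : ∀ z, inner ℂ z ((T0 + T1) z) = ((∑ s, β s * ‖inner ℂ (v s) z‖ ^ 2 + ‖inner ℂ x z‖ ^ 2 : ℝ) : ℂ) := by
    intro z
    rw [LinearMap.add_apply, inner_add_right, quad_aux v β T0 hT0, hT1, inner_smul_right,
      ← inner_conj_symm z x, RCLike.mul_conj]
    simp
  have hS : (T0 + T1).IsSymmetric := by
    rw [LinearMap.isSymmetric_iff_inner_map_self_real]
    intro z
    rw [← inner_conj_symm, hq]
    simp
  refine ⟨hS.eigenvectorBasis hE, hS.eigenvalues hE, hS.eigenvalues_antitone hE, fun z => ?_, ?_⟩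
  · have := quad_aux (hS.eigenvectorBasis hE) (hS.eigenvalues hE) _ (hS.apply_eigenvectorBasis hE) z
    rw [hq] at this
    exact_mod_cast this.symm
  · have h1 := hS.det_eq_prod_eigenvalues hE
    rw [← LinearMap.det_toMatrix v.toBasis] at h1
    have h2 : LinearMap.toMatrix v.toBasis v.toBasis (T0 + T1) =
        Matrix.diagonal (fun i => (β i : ℂ)) + replicateCol Unit (fun i => inner ℂ (v i) x)
          * replicateRow Unit (fun i => inner ℂ x (v i)) := by
      ext i j
      rw [LinearMap.toMatrix_apply]
      rw [v.coe_toBasis_repr_apply, v.repr_apply_apply, v.coe_toBasis, LinearMap.add_apply, hT0,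
        hT1, inner_add_right, inner_smul_right, inner_smul_right,
        orthonormal_iff_ite.1 v.orthonormal]
      simp only [Matrix.add_apply, Matrix.mul_apply, Matrix.diagonal_apply, replicateCol_apply,
        replicateRow_apply, Finset.univ_unique, Finset.sum_const, Finset.card_singleton, one_smul]
      rw [mul_comm (inner ℂ x (v j))]
      by_cases hh : i = j <;> simp [hh]
    have hu : IsUnit (Matrix.diagonal (fun i => (β i : ℂ))).det := by
      rw [Matrix.det_diagonal, isUnit_iff_ne_zero, Finset.prod_ne_zero_iff]
      intro i _
      exact_mod_cast (hβ i).ne'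
    rw [h2, det_add_replicateCol_mul_replicateRow hu, Matrix.det_diagonal, Matrix.inv_diagonal] at h1
    have h3 : (1 + replicateRow Unit (fun i => inner ℂ x (v i)) * diagonal (Ring.inverse fun i => (β i : ℂ)) *
        replicateCol Unit (fun i => inner ℂ (v i) x)).det = ((1 + ∑ s, ‖inner ℂ (v s) x‖ ^ 2 / β s : ℝ) : ℂ) := by
      have hR : (Ring.inverse fun i => (β i : ℂ)) = fun i => ((β i : ℂ))⁻¹ := by
        have hm : (fun i => (β i : ℂ)) * (fun i => ((β i : ℂ))⁻¹) = 1 := by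
          ext i
          have : (β i : ℂ) ≠ 0 := by exact_mod_cast (hβ i).ne'
          simp [this]
        let w : (Fin m → ℂ)ˣ := ⟨fun i => (β i : ℂ), fun i => ((β i : ℂ))⁻¹, hm,
          by rw [mul_comm]; exact hm⟩
        exact Ring.inverse_unit w
      rw [hR, Matrix.det_unique, Matrix.add_apply, Matrix.one_apply_eq, Matrix.mul_apply]
      push_cast
      congr 1
      refine Finset.sum_congr rfl fun s _ => ?_
      rw [Matrix.mul_diagonal, replicateRow_apply, replicateCol_apply]
      rw [← inner_conj_symm x (v s), mul_right_comm, RCLike.conj_mul]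
      simp [div_eq_mul_inv]
    rw [h3] at h1
    have h4 : ((∏ s, hS.eigenvalues hE s : ℝ) : ℂ) =
        (((∏ s, β s) * (1 + ∑ s, ‖inner ℂ (v s) x‖ ^ 2 / β s) : ℝ) : ℂ) := by
      rw [Complex.ofReal_mul, Complex.ofReal_prod, Complex.ofReal_prod]
      exact h1.symm
    exact Complex.ofReal_injective h4

lemma core_eps {m : ℕ} {E : Type*} [NormedAddCommGroup E] [InnerProductSpace ℂ E]
    (v u : OrthonormalBasis (Fin m) ℂ E) (lam mu : ℕ → ℝ) (x : E) (J L : ℕ)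
    (hJL : J < L) (hLm : L < m)
    (hlam : ∀ s t, s ≤ t → t < m → lam t ≤ lam s) (hpos : ∀ s, s < L → 0 < lam s)
    (hlam0 : ∀ s, s < m → 0 ≤ lam s)
    (hmu : ∀ s t, s ≤ t → t < m → mu t ≤ mu s)
    (h : ∀ z, ∑ s : Fin m, mu s * ‖inner ℂ (u s) z‖ ^ 2 =
        ∑ s : Fin m, lam s * ‖inner ℂ (v s) z‖ ^ 2 + ‖inner ℂ x z‖ ^ 2)
    (ε : ℝ) (hε : 0 < ε) (hεL : ε ≤ lam (L - 1)) :
    (∑ s : Fin m, if L ≤ (s : ℕ) then ‖inner ℂ (v s) x‖ ^ 2 else 0) * ∏ s ∈ Finset.Ico J L, lam s ≤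
      (lam J + ‖x‖ ^ 2) * ∏ s ∈ Finset.Ico (J + 1) (L + 1), (mu s + ε) := by
  set β : ℕ → ℝ := fun s => if s < L then lam (max s J) else ε with hβdef
  have hβpos : ∀ s, 0 < β s := by
    intro s
    simp only [hβdef]
    split_ifs with hs
    · exact hpos _ (by omega)
    · exact hε
  have hβanti : ∀ s t, s ≤ t → t < m → β t ≤ β s := by
    intro s t hst ht
    simp only [hβdef]
    split_ifs with h1 h2
    · exact hlam _ _ (by omega) (by omega)
    · omega
    · exact hεL.trans (hlam _ _ (by omega) (by omega))
    · exact le_rfl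
  obtain ⟨a, κ, hκ, hq, hdet⟩ := spec_aux v (fun s : Fin m => β s) (fun s => hβpos s) x
  have hβF : Antitone (fun s : Fin m => β s) := fun s t hst => hβanti s t hst t.2
  set K : ℕ → ℝ := fun s => if hs : s < m then κ ⟨s, hs⟩ else 0 with hK
  have hKF : ∀ s : Fin m, K s = κ s := fun s => by simp [hK]
  have hKβ : ∀ s, s < m → β s ≤ K s := by
    intro s hs
    have := weyl_aux (r := 0) v a (fun s : Fin m => β s) κ hβF hκ 0 ⟨s, hs⟩ ⟨s, hs⟩ (by simp)
      (fun z _ => by rw [hq z]; exact le_add_of_nonneg_right (by positivity))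
    simpa [hK, hs] using this
  have hKpos : ∀ s, s < m → 0 < K s := fun s hs => (hβpos s).trans_le (hKβ s hs)
  have hKmu : ∀ s, s < m → K s ≤ mu s + ε := by
    intro s hs
    have := weyl_aux (r := 0) a u κ (fun s : Fin m => mu s + ε) hκ
      (fun s t hst => by simpa using hmu s t hst t.2) 0 ⟨s, hs⟩ ⟨s, hs⟩ (by simp)
      (fun z _ => by
        rw [hq z]
        simp only [add_mul, Finset.sum_add_distrib]
        rw [h z, ← Finset.mul_sum, u.sum_sq_norm_inner_right, ← v.sum_sq_norm_inner_right,
          Finset.mul_sum, add_right_comm, ← Finset.sum_add_distrib]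
        refine add_le_add_left (Finset.sum_le_sum fun s _ => ?_) _
        rw [← add_mul]
        refine mul_le_mul_of_nonneg_right ?_ (by positivity)
        simp only [hβdef]
        split_ifs with h1
        · have := hlam s (max s J) (by omega) (by omega)
          linarith
        · have := hlam0 s s.2
          linarith)
    simpa [hK, hs] using this
  have hKs : ∀ s, s + 1 < m → K (s + 1) ≤ β s := by
    intro s hs
    have := weyl_aux (r := 1) a v κ (fun s : Fin m => β s) hκ hβF
      (LinearMap.pi fun _ => innerₛₗ ℂ x) ⟨s, by omega⟩ ⟨s + 1, hs⟩ (by simp)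
      (fun z hz => by
        have hz' : inner ℂ x z = 0 := congrFun hz 0
        rw [hq z, hz']
        simp)
    simpa [hK, hs] using this
  have hK0 : K 0 ≤ lam J + ‖x‖ ^ 2 := by
    have h0 : 0 < m := by omega
    have := weyl_aux (r := 0) a v κ (fun _ => lam J + ‖x‖ ^ 2) hκ (fun _ _ _ => le_rfl)
      0 ⟨0, h0⟩ ⟨0, h0⟩ (by simp)
      (fun z _ => by
        rw [hq z]
        simp only [add_mul, Finset.sum_add_distrib]
        refine add_le_add (Finset.sum_le_sum fun s _ => ?_) ?_
        · refine mul_le_mul_of_nonneg_right ?_ (by positivity)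
          have := hβanti 0 s (by omega) s.2
          simpa [hβdef, show 0 < L by omega] using this
        · rw [← Finset.mul_sum, v.sum_sq_norm_inner_right, ← mul_pow]
          exact pow_le_pow_left₀ (norm_nonneg _) (norm_inner_le_norm x z) 2)
    simpa [hK, h0] using this
  have hprodK : ∏ s, κ s = K 0 * (∏ s ∈ Finset.range J, K (s + 1)) *
      (∏ s ∈ Finset.Ico (J + 1) (L + 1), K s) * ∏ s ∈ Finset.Ico (L + 1) m, K s := by
    rw [← Finset.prod_congr rfl (fun s _ => hKF s), ← Finset.prod_range K,
      ← Finset.prod_range_mul_prod_Ico K (show L + 1 ≤ m by omega),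
      ← Finset.prod_range_mul_prod_Ico K (show J + 1 ≤ L + 1 by omega), Finset.prod_range_succ',
      mul_comm (K 0)]
  have hprodβ : ∏ s : Fin m, β s = lam J ^ J * (∏ s ∈ Finset.Ico J L, lam s) *
      (ε ^ (m - (L + 1)) * ε) := by
    rw [← Finset.prod_range β,
      ← Finset.prod_range_mul_prod_Ico β (show L ≤ m by omega),
      ← Finset.prod_range_mul_prod_Ico β (show J ≤ L by omega)]
    have e1 : ∏ s ∈ Finset.range J, β s = lam J ^ J := by
      rw [Finset.prod_congr rfl (g := fun _ => lam J)]
      · simp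
      · intro s hs
        have := Finset.mem_range.1 hs
        simp [hβdef, show s < L by omega, show max s J = J by omega]
    have e2 : ∏ s ∈ Finset.Ico J L, β s = ∏ s ∈ Finset.Ico J L, lam s := by
      refine Finset.prod_congr rfl fun s hs => ?_
      have := Finset.mem_Ico.1 hs
      simp [hβdef, this.2, show max s J = s by omega]
    have e3 : ∏ s ∈ Finset.Ico L m, β s = ε ^ (m - (L + 1)) * ε := by
      rw [Finset.prod_congr rfl (g := fun _ => ε)]
      · rw [← pow_succ]
        simp only [Finset.prod_const, Nat.card_Ico]
        congr 1
        omega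
      · intro s hs
        have := Finset.mem_Ico.1 hs
        simp [hβdef, show ¬ s < L by omega]
    rw [e1, e2, e3]
  have b1 : ∏ s ∈ Finset.range J, K (s + 1) ≤ lam J ^ J := by
    calc _ ≤ ∏ s ∈ Finset.range J, lam J := by
          refine Finset.prod_le_prod (fun s hs => ?_) (fun s hs => ?_)
          · have := Finset.mem_range.1 hs
            exact (hKpos _ (by omega)).le
          · have := Finset.mem_range.1 hs
            have h2 := hKs s (by omega)
            simpa [hβdef, show s < L by omega, show max s J = J by omega] using h2
      _ = _ := by simp
  have b2 : ∏ s ∈ Finset.Ico (J + 1) (L + 1), K s ≤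
      ∏ s ∈ Finset.Ico (J + 1) (L + 1), (mu s + ε) := by
    refine Finset.prod_le_prod (fun s hs => ?_) (fun s hs => ?_)
    · have := Finset.mem_Ico.1 hs
      exact (hKpos _ (by omega)).le
    · have := Finset.mem_Ico.1 hs
      exact hKmu s (by omega)
  have b3 : ∏ s ∈ Finset.Ico (L + 1) m, K s ≤ ε ^ (m - (L + 1)) := by
    calc _ ≤ ∏ s ∈ Finset.Ico (L + 1) m, ε := by
          refine Finset.prod_le_prod (fun s hs => ?_) (fun s hs => ?_)
          · have := Finset.mem_Ico.1 hs
            exact (hKpos _ (by omega)).le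
          · have := Finset.mem_Ico.1 hs
            have h2 := hKs (s - 1) (by omega)
            rw [show s - 1 + 1 = s by omega] at h2
            simpa [hβdef, show ¬ s - 1 < L by omega] using h2
      _ = _ := by simp
  have p1 : 0 ≤ ∏ s ∈ Finset.range J, K (s + 1) := by
    refine Finset.prod_nonneg fun s hs => ?_
    have := Finset.mem_range.1 hs
    exact (hKpos _ (by omega)).le
  have p2 : 0 ≤ ∏ s ∈ Finset.Ico (J + 1) (L + 1), K s := by
    refine Finset.prod_nonneg fun s hs => ?_
    have := Finset.mem_Ico.1 hs
    exact (hKpos _ (by omega)).le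
  have p3 : 0 ≤ ∏ s ∈ Finset.Ico (L + 1) m, K s := by
    refine Finset.prod_nonneg fun s hs => ?_
    have := Finset.mem_Ico.1 hs
    exact (hKpos _ (by omega)).le
  have p4 : 0 ≤ K 0 := (hKpos 0 (by omega)).le
  have hJ : 0 < lam J := hpos J hJL
  have hup : ∏ s, κ s ≤ (lam J + ‖x‖ ^ 2) * lam J ^ J *
      (∏ s ∈ Finset.Ico (J + 1) (L + 1), (mu s + ε)) * ε ^ (m - (L + 1)) := by
    rw [hprodK]
    have := p2.trans b2
    gcongr
  have hS : (∑ s : Fin m, if L ≤ (s : ℕ) then ‖inner ℂ (v s) x‖ ^ 2 else 0) / ε ≤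
      1 + ∑ s : Fin m, ‖inner ℂ (v s) x‖ ^ 2 / β s := by
    rw [Finset.sum_div]
    refine le_add_of_nonneg_of_le zero_le_one (Finset.sum_le_sum fun s _ => ?_)
    split_ifs with hs
    · simp [hβdef, show ¬ (s : ℕ) < L by omega]
    · rw [zero_div]
      have := hβpos s
      positivity
  have hP : 0 ≤ ∏ s ∈ Finset.Ico J L, lam s :=
    Finset.prod_nonneg fun s hs => (hpos s (Finset.mem_Ico.1 hs).2).le
  have hlow : lam J ^ J * (∏ s ∈ Finset.Ico J L, lam s) * (ε ^ (m - (L + 1)) * ε) *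
      ((∑ s : Fin m, if L ≤ (s : ℕ) then ‖inner ℂ (v s) x‖ ^ 2 else 0) / ε) ≤ ∏ s, κ s := by
    rw [hdet, hprodβ]
    gcongr
  have hc : 0 < lam J ^ J * ε ^ (m - (L + 1)) := by positivity
  refine le_of_mul_le_mul_left ?_ hc
  refine le_trans (le_of_eq ?_) (hlow.trans (hup.trans (le_of_eq ?_)))
  · field_simp
  · ring

lemma core {m : ℕ} {E : Type*} [NormedAddCommGroup E] [InnerProductSpace ℂ E]
    (v u : OrthonormalBasis (Fin m) ℂ E) (lam mu : ℕ → ℝ) (x : E) (J L : ℕ)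
    (hJL : J < L) (hLm : L < m)
    (hlam : ∀ s t, s ≤ t → t < m → lam t ≤ lam s) (hpos : ∀ s, s < L → 0 < lam s)
    (hlam0 : ∀ s, s < m → 0 ≤ lam s)
    (hmu : ∀ s t, s ≤ t → t < m → mu t ≤ mu s)
    (h : ∀ z, ∑ s : Fin m, mu s * ‖inner ℂ (u s) z‖ ^ 2 =
        ∑ s : Fin m, lam s * ‖inner ℂ (v s) z‖ ^ 2 + ‖inner ℂ x z‖ ^ 2) :
    (∑ s : Fin m, if L ≤ (s : ℕ) then ‖inner ℂ (v s) x‖ ^ 2 else 0) * ∏ s ∈ Finset.Ico J L, lam s ≤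
      (lam J + ‖x‖ ^ 2) * ∏ s ∈ Finset.Ico (J + 1) (L + 1), mu s := by
  have ht : Filter.Tendsto (fun ε : ℝ => (lam J + ‖x‖ ^ 2) *
      ∏ s ∈ Finset.Ico (J + 1) (L + 1), (mu s + ε)) (nhdsWithin 0 (Set.Ioi 0))
      (nhds ((lam J + ‖x‖ ^ 2) * ∏ s ∈ Finset.Ico (J + 1) (L + 1), (mu s + 0))) := by
    apply Filter.Tendsto.mono_left _ nhdsWithin_le_nhds
    apply Continuous.tendsto
    fun_prop
  simp only [add_zero] at ht
  refine ge_of_tendsto ht ?_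
  have hp : 0 < lam (L - 1) := hpos _ (by omega)
  filter_upwards [Ioc_mem_nhdsGT hp] with ε hε
  exact core_eps v u lam mu x J L hJL hLm hlam hpos hlam0 hmu h ε hε.1 hε.2

lemma inner_toLp_eq {m : ℕ} (x y : Fin m → ℂ) :
    inner ℂ (WithLp.toLp 2 x : EuclideanSpace ℂ (Fin m)) (WithLp.toLp 2 y) = cInner x y := by
  simp [cInner, PiLp.inner_apply, mul_comm]

lemma vecNorm2_eq {m : ℕ} (x : Fin m → ℂ) :
    vecNorm2 x = ‖(WithLp.toLp 2 x : EuclideanSpace ℂ (Fin m))‖ := by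
  simp [vecNorm2, EuclideanSpace.norm_eq]

lemma exists_basis {m : ℕ} (v : ℕ → Fin m → ℂ)
    (hON : ∀ i ∈ Finset.Icc 1 m, ∀ j ∈ Finset.Icc 1 m,
      cInner (v i) (v j) = if i = j then 1 else 0) :
    ∃ b : OrthonormalBasis (Fin m) ℂ (EuclideanSpace ℂ (Fin m)),
      ∀ i : Fin m, b i = WithLp.toLp 2 (v (i + 1)) := by
  have ho : Orthonormal ℂ
      (fun i : Fin m => (WithLp.toLp 2 (v (i + 1)) : EuclideanSpace ℂ (Fin m))) := by
    rw [orthonormal_iff_ite]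
    intro i j
    rw [inner_toLp_eq, hON _ (by simp) _ (by simp)]
    simp [Fin.ext_iff]
  refine ⟨OrthonormalBasis.mk ho ?_, fun i => by rw [OrthonormalBasis.coe_mk]⟩
  rw [ho.linearIndependent.span_eq_top_of_card_eq_finrank' (by simp)]

lemma gram_appendRow {n m : ℕ} (M : Matrix (Fin n) (Fin m) ℂ) (X : Fin m → ℂ) :
    (appendRow M X)ᴴ * appendRow M X =
      Mᴴ * M + Matrix.vecMulVec (fun j => starRingEnd ℂ (X j)) X := by
  ext i j
  simp [Matrix.mul_apply, Fin.sum_univ_castSucc, appendRow, Matrix.vecMulVec_apply]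

theorem singular_value_update (n m : ℕ) (hnm : n ≤ m)
    (M : Matrix (Fin n) (Fin m) ℂ) (X : Fin m → ℂ)
    (k l : ℕ) (hk : 1 ≤ k - 1) (hkl : k - 1 ≤ l) (hlm : l < m)
    -- the singular values `σ` of `M` together with an orthonormal basis of right-singular
    -- vectors `v` of `M`:
    (σ : ℕ → ℝ) (v : ℕ → Fin m → ℂ)
    (hσ0 : ∀ i ∈ Finset.Icc 1 m, 0 ≤ σ i)
    (hσmono : ∀ i ∈ Finset.Icc 1 m, ∀ j ∈ Finset.Icc 1 m, i ≤ j → σ j ≤ σ i)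
    (hON : ∀ i ∈ Finset.Icc 1 m, ∀ j ∈ Finset.Icc 1 m,
      cInner (v i) (v j) = if i = j then 1 else 0)
    (heig : ∀ i ∈ Finset.Icc 1 m,
      (Mᴴ * M).mulVec (v i) = (((σ i : ℂ)) ^ 2) • v i)
    -- the singular values `σ'` of `M'` (witnessed by an orthonormal eigenbasis `u` of
    -- `M'ᴴ M'`):
    (σ' : ℕ → ℝ) (u : ℕ → Fin m → ℂ)
    (hσ'0 : ∀ i ∈ Finset.Icc 1 m, 0 ≤ σ' i)
    (hσ'mono : ∀ i ∈ Finset.Icc 1 m, ∀ j ∈ Finset.Icc 1 m, i ≤ j → σ' j ≤ σ' i)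
    (hON' : ∀ i ∈ Finset.Icc 1 m, ∀ j ∈ Finset.Icc 1 m,
      cInner (u i) (u j) = if i = j then 1 else 0)
    (heig' : ∀ i ∈ Finset.Icc 1 m,
      ((appendRow M X)ᴴ * appendRow M X).mulVec (u i) = (((σ' i : ℂ)) ^ 2) • u i) :
    -- `P X†` is the orthogonal projection of `X†` onto the span of the `m - l` smallest
    -- right-singular directions `v_{l+1}, …, v_m` of `M`:
    vecNorm2 (∑ i ∈ Finset.Icc (l + 1) m,
        cInner (v i) (fun j => starRingEnd ℂ (X j)) • v i) *
      (Real.sqrt (vecNorm2 X ^ 2 + σ (k - 1) ^ 2))⁻¹ *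
      ∏ i ∈ Finset.Icc (k - 1) l, σ i ≤
    ∏ i ∈ Finset.Icc k (l + 1), σ' i := by
  obtain ⟨b, hb⟩ := exists_basis v hON
  obtain ⟨c, hc⟩ := exists_basis u hON'
  have hP'0 : 0 ≤ ∏ i ∈ Finset.Icc k (l + 1), σ' i := by
    refine Finset.prod_nonneg fun i hi => hσ'0 i ?_
    simp only [Finset.mem_Icc] at hi ⊢
    omega
  have hP0 : 0 ≤ ∏ i ∈ Finset.Icc (k - 1) l, σ i := by
    refine Finset.prod_nonneg fun i hi => hσ0 i ?_
    simp only [Finset.mem_Icc] at hi ⊢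
    omega
  by_cases hl : σ l = 0
  · rw [Finset.prod_eq_zero (i := l) (by simp; omega) hl, mul_zero]
    exact hP'0
  have hlpos : 0 < σ l := lt_of_le_of_ne (hσ0 l (by simp; omega)) (Ne.symm hl)
  set xc : Fin m → ℂ := fun j => starRingEnd ℂ (X j) with hxc
  set x : EuclideanSpace ℂ (Fin m) := WithLp.toLp 2 xc with hx
  have hxn : vecNorm2 X = ‖x‖ := by
    rw [hx, ← vecNorm2_eq]
    simp [vecNorm2, hxc]
  have hquad : ∀ z, ∑ s : Fin m, σ' (s + 1) ^ 2 * ‖inner ℂ (c s) z‖ ^ 2 =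
      ∑ s : Fin m, σ (s + 1) ^ 2 * ‖inner ℂ (b s) z‖ ^ 2 + ‖inner ℂ x z‖ ^ 2 := by
    intro z
    have q1 := quad_aux b (fun s => σ (s + 1) ^ 2) (Matrix.toEuclideanLin (Mᴴ * M))
      (fun i => by
        rw [hb, Matrix.toLpLin_toLp, Matrix.toLin'_apply, heig _ (by simp)]
        simp) z
    have q2 := quad_aux c (fun s => σ' (s + 1) ^ 2)
      (Matrix.toEuclideanLin ((appendRow M X)ᴴ * appendRow M X))
      (fun i => by
        rw [hc, Matrix.toLpLin_toLp, Matrix.toLin'_apply, heig' _ (by simp)]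
        simp) z
    have q3 : Matrix.toEuclideanLin ((appendRow M X)ᴴ * appendRow M X) z =
        Matrix.toEuclideanLin (Mᴴ * M) z + inner ℂ x z • x := by
      rw [gram_appendRow, map_add, LinearMap.add_apply]
      congr 1
      ext i
      simp [hx, hxc, Matrix.toLpLin_apply, PiLp.inner_apply, Matrix.vecMulVec_mulVec, dotProduct,
        mul_comm]
    rw [q3, inner_add_right, q1, inner_smul_right, ← inner_conj_symm z x, RCLike.mul_conj] at q2
    apply Complex.ofReal_injective
    rw [Complex.ofReal_add, Complex.ofReal_pow]
    exact q2.symm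
  have hcore := core b c (fun s => σ (s + 1) ^ 2) (fun s => σ' (s + 1) ^ 2) x (k - 2) l
    (by omega) hlm
    (fun s t hst ht => pow_le_pow_left₀ (hσ0 _ (by simp; omega))
      (hσmono _ (by simp; omega) _ (by simp; omega) (by omega)) 2)
    (fun s hs => pow_pos (hlpos.trans_le (hσmono _ (by simp; omega) _ (by simp; omega) (by omega))) 2)
    (fun s hs => sq_nonneg _)
    (fun s t hst ht => pow_le_pow_left₀ (hσ'0 _ (by simp; omega))
      (hσ'mono _ (by simp; omega) _ (by simp; omega) (by omega)) 2)
    hquad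
  have hproj : vecNorm2 (∑ i ∈ Finset.Icc (l + 1) m, cInner (v i) xc • v i) ^ 2 =
      ∑ s : Fin m, if l ≤ (s : ℕ) then ‖inner ℂ (b s) x‖ ^ 2 else 0 := by
    have e1 : ∑ i ∈ Finset.Icc (l + 1) m, cInner (v i) xc • v i =
        ∑ s : Fin m, (if l ≤ (s : ℕ) then cInner (v (s + 1)) xc else 0) • v (s + 1) := by
      rw [← Finset.sum_range
        (fun s : ℕ => (if l ≤ s then cInner (v (s + 1)) xc else 0) • v (s + 1)),
        ← Finset.sum_range_add_sum_Ico _ hlm.le,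
        Finset.sum_eq_zero (s := Finset.range l), zero_add]
      · rw [← Finset.Ico_add_one_right_eq_Icc,
          ← Finset.sum_Ico_add' (fun i => cInner (v i) xc • v i)]
        refine Finset.sum_congr rfl fun s hs => ?_
        rw [if_pos (Finset.mem_Ico.1 hs).1]
      · intro s hs
        simp [show ¬ l ≤ s by simpa using hs]
    have e2 : (WithLp.toLp 2 (∑ i ∈ Finset.Icc (l + 1) m, cInner (v i) xc • v i) :
        EuclideanSpace ℂ (Fin m)) =
        ∑ s : Fin m, (if l ≤ (s : ℕ) then inner ℂ (b s) x else 0) • b s := by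
      rw [e1, WithLp.toLp_sum]
      refine Finset.sum_congr rfl fun s _ => ?_
      rw [WithLp.toLp_smul, hb, hx, inner_toLp_eq]
    rw [vecNorm2_eq, e2, ← b.sum_sq_norm_inner_right]
    refine Finset.sum_congr rfl fun s _ => ?_
    rw [b.orthonormal.inner_right_fintype]
    split_ifs <;> simp
  have r1 : ∏ s ∈ Finset.Ico (k - 2) l, σ (s + 1) ^ 2 = (∏ i ∈ Finset.Icc (k - 1) l, σ i) ^ 2 := by
    rw [← Finset.prod_pow, ← Finset.Ico_add_one_right_eq_Icc,
      Finset.prod_Ico_add' (fun i => σ i ^ 2), show k - 2 + 1 = k - 1 by omega]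
  have r2 : ∏ s ∈ Finset.Ico (k - 2 + 1) (l + 1), σ' (s + 1) ^ 2 =
      (∏ i ∈ Finset.Icc k (l + 1), σ' i) ^ 2 := by
    rw [← Finset.prod_pow, ← Finset.Ico_add_one_right_eq_Icc,
      Finset.prod_Ico_add' (fun i => σ' i ^ 2), show k - 2 + 1 + 1 = k by omega]
  rw [← hproj, r1, r2] at hcore
  simp only [show k - 2 + 1 = k - 1 by omega] at hcore
  rw [hxn]
  have hkpos : 0 < σ (k - 1) :=
    hlpos.trans_le (hσmono _ (by simp; omega) _ (by simp; omega) (by omega))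
  have hD : 0 < ‖x‖ ^ 2 + σ (k - 1) ^ 2 := by positivity
  refine (pow_le_pow_iff_left₀ (by rw [vecNorm2_eq]; positivity) hP'0 two_ne_zero).1 ?_
  rw [mul_pow, mul_pow, inv_pow, Real.sq_sqrt hD.le, mul_right_comm, ← div_eq_mul_inv,
    div_le_iff₀ hD]
  linarith
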